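/- arXiv:2005.01225 — 3 statements merged into one kernel-verified Lean document; each statement's English description precedes it below -/
import Mathlib

section
/- For every z ∈ ℂ^m with z ≠ 0, the stabilizer of z in D_{2p} has order at most 2; moreover it has order exactly 2 if and only if there exists g ∈ D_{2p} such that all coordinates of g·z are real. (In particular, every point of ℂ^m ∖ {0} has isotropy group either trivial or conjugate to the order-2 subgroup ⟨τ⟩.) -/
noncomputable section

/-- The `ℝ`-linear action of `D_{2p}` on `ℂ^m`, where `ζ` acts as coordinatewise
multiplication by `ω = exp(2πi·i/p)` and `τ` acts as coordinatewise complex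
conjugation (so the reflection `sr a = ζ^a τ ⋯` acts by `z ↦ conj(ω^a z)`). -/
def dihedralAct (p i m : ℕ) : DihedralGroup p → (Fin m → ℂ) → (Fin m → ℂ)
  | .r a, z => fun t => Complex.exp (2 * Real.pi * Complex.I * i / p) ^ a.val * z t
  | .sr a, z => fun t =>
      (starRingEnd ℂ) (Complex.exp (2 * Real.pi * Complex.I * i / p) ^ a.val * z t)

/-!
A rotation fixing a nonzero vector is trivial, because it multiplies a nonzero coordinate by a
nontrivial root of unity. The stabilizer therefore contains at most one reflection, since the
product of two reflections is a rotation, and it has order two exactly when it contains one. As `n`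
is odd, every reflection is a conjugate `g⁻¹τg`; it fixes `z` iff `τ` fixes `g • z`, that is, iff
`g • z` is real.
-/

section RotationFree

open DihedralGroup

variable {n : ℕ}

/-- A subgroup of `DihedralGroup n` is rotation-free if it contains no nontrivial rotation. For a
point stabilizer this says that the rotations act freely on the orbit of the point. -/
def RotationFree (H : Subgroup (DihedralGroup n)) : Prop :=
  ∀ a, r a ∈ H → a = 0

namespace RotationFree

variable {H : Subgroup (DihedralGroup n)}

theorem coe_eq_pair_of_sr_mem (hH : RotationFree H) {a : ZMod n} (ha : sr a ∈ H) :
    (H : Set (DihedralGroup n)) = {1, sr a} := by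
  refine Set.Subset.antisymm ?_ (Set.pair_subset H.one_mem ha)
  rintro (b | b) hb
  · exact .inl (congrArg r (hH b hb))
  · have rotation_mem : r (a - b) ∈ H := sr_mul_sr b a ▸ H.mul_mem hb ha
    exact .inr (congrArg sr (sub_eq_zero.mp (hH _ rotation_mem)).symm)

theorem eq_bot_of_forall_sr_notMem (hH : RotationFree H) (h : ∀ a, sr a ∉ H) : H = ⊥ := by
  refine H.eq_bot_iff_forall.mpr ?_
  rintro (a | a) ha
  · exact congrArg r (hH a ha)
  · exact absurd ha (h a)

theorem card_eq_two_of_sr_mem (hH : RotationFree H) {a : ZMod n} (ha : sr a ∈ H) :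
    Nat.card H = 2 := by
  rw [← SetLike.coe_sort_coe, hH.coe_eq_pair_of_sr_mem ha, Nat.card_coe_set_eq]
  exact Set.ncard_pair (by simp [one_def, -r_zero])

theorem card_eq_two_iff_exists_sr_mem (hH : RotationFree H) :
    Nat.card H = 2 ↔ ∃ a, sr a ∈ H := by
  refine ⟨fun hcard => ?_, fun ⟨_, ha⟩ => hH.card_eq_two_of_sr_mem ha⟩
  by_contra! h
  simp [hH.eq_bot_of_forall_sr_notMem h] at hcard

theorem card_le_two (hH : RotationFree H) : Nat.card H ≤ 2 := by
  by_cases h : ∃ a, sr a ∈ H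
  · exact (hH.card_eq_two_iff_exists_sr_mem.mpr h).le
  · simp [hH.eq_bot_of_forall_sr_notMem (not_exists.mp h)]

end RotationFree

theorem exists_inv_mul_sr_zero_mul_eq_sr (g : DihedralGroup n) :
    ∃ a, g⁻¹ * sr 0 * g = sr a := by
  cases g <;> simp

theorem exists_inv_mul_sr_zero_mul_eq (hn : Odd n) (a : ZMod n) :
    ∃ g : DihedralGroup n, g⁻¹ * sr 0 * g = sr a := by
  have two_isUnit : IsUnit (2 : ZMod n) :=
    mod_cast (ZMod.isUnit_iff_coprime 2 n).mpr hn.coprime_two_left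
  obtain ⟨b, rfl⟩ := Even.of_isUnit_two two_isUnit a
  exact ⟨r b, by simp⟩

theorem RotationFree.card_eq_two_iff_exists_conj_mem {H : Subgroup (DihedralGroup n)}
    (hH : RotationFree H) (hn : Odd n) :
    Nat.card H = 2 ↔ ∃ g : DihedralGroup n, g⁻¹ * sr 0 * g ∈ H := by
  rw [hH.card_eq_two_iff_exists_sr_mem]
  constructor
  · rintro ⟨a, ha⟩
    obtain ⟨g, hg⟩ := exists_inv_mul_sr_zero_mul_eq hn a
    exact ⟨g, hg ▸ ha⟩
  · rintro ⟨g, hg⟩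
    obtain ⟨a, ha⟩ := exists_inv_mul_sr_zero_mul_eq_sr g
    exact ⟨a, ha ▸ hg⟩

end RotationFree

theorem inv_mul_mul_mem_stabilizer_iff {G X : Type*} [Group G] [MulAction G X] (g h : G) (x : X) :
    g⁻¹ * h * g ∈ MulAction.stabilizer G x ↔ h • g • x = g • x := by
  rw [MulAction.mem_stabilizer_iff, mul_smul, mul_smul, inv_smul_eq_iff]

section DihedralAct

variable {n i m : ℕ}

theorem isPrimitiveRoot_exp_mul_div (hn : n ≠ 0) (hi : i.Coprime n) :
    IsPrimitiveRoot (Complex.exp (2 * Real.pi * Complex.I * i / n)) n := by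
  simpa only [mul_div_assoc] using Complex.isPrimitiveRoot_exp_of_coprime i n hn hi

theorem exp_mul_div_pow_eq_one (hn : n ≠ 0) (i : ℕ) :
    Complex.exp (2 * Real.pi * Complex.I * i / n) ^ n = 1 := by
  rw [← Complex.exp_nat_mul, mul_div_cancel₀ _ (Nat.cast_ne_zero.mpr hn), mul_comm]
  exact Complex.exp_nat_mul_two_pi_mul_I i

/-- The character `a ↦ ω ^ a` of `ZMod n`, where `ω = exp (2πi·i/n)`, through which the rotations
act in `dihedralAct`. -/
def rotationChar (n i : ℕ) [NeZero n] : AddChar (ZMod n) ℂ :=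
  AddChar.zmodChar n (exp_mul_div_pow_eq_one (NeZero.ne n) i)

theorem isPrimitive_rotationChar [NeZero n] (hi : i.Coprime n) : (rotationChar n i).IsPrimitive :=
  AddChar.zmodChar_primitive_of_primitive_root n (isPrimitiveRoot_exp_mul_div (NeZero.ne n) hi)

theorem dihedralAct_r [NeZero n] (a : ZMod n) (z : Fin m → ℂ) :
    dihedralAct n i m (.r a) z = rotationChar n i a • z :=
  rfl

theorem dihedralAct_sr [NeZero n] (a : ZMod n) (z : Fin m → ℂ) :
    dihedralAct n i m (.sr a) z = star (rotationChar n i a • z) :=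
  rfl

theorem star_rotationChar [NeZero n] (a : ZMod n) :
    star (rotationChar n i a) = rotationChar n i (-a) :=
  ((rotationChar n i).map_neg_eq_conj a).symm

theorem dihedralAct_one [NeZero n] (z : Fin m → ℂ) : dihedralAct n i m 1 z = z := by
  rw [DihedralGroup.one_def, dihedralAct_r, AddChar.map_zero_eq_one, one_smul]

theorem dihedralAct_mul [NeZero n] (g h : DihedralGroup n) (z : Fin m → ℂ) :
    dihedralAct n i m (g * h) z = dihedralAct n i m g (dihedralAct n i m h z) := by
  cases g <;> cases h <;>
    simp only [DihedralGroup.r_mul_r, DihedralGroup.r_mul_sr, DihedralGroup.sr_mul_r,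
      DihedralGroup.sr_mul_sr, dihedralAct_r, dihedralAct_sr, star_smul, star_star,
      star_rotationChar, smul_smul, ← AddChar.map_add_eq_mul] <;>
    congr 2 <;> abel

/-- `dihedralAct` as a group action. It is not an instance since `i` cannot be recovered from the
types. -/
abbrev dihedralMulAction (n i m : ℕ) [NeZero n] : MulAction (DihedralGroup n) (Fin m → ℂ) where
  smul := dihedralAct n i m
  one_smul := dihedralAct_one
  mul_smul := dihedralAct_mul

theorem dihedralAct_r_eq_self_iff [NeZero n] (hi : i.Coprime n) {z : Fin m → ℂ} (hz : z ≠ 0)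
    {a : ZMod n} : dihedralAct n i m (.r a) z = z ↔ a = 0 := by
  rw [← (isPrimitive_rotationChar hi).zmod_char_eq_one_iff, dihedralAct_r]
  simpa only [one_smul] using (smul_left_injective ℂ hz).eq_iff (b := 1)

theorem dihedralAct_sr_zero_eq_self_iff [NeZero n] {z : Fin m → ℂ} :
    dihedralAct n i m (.sr 0) z = z ↔ ∀ t, (z t).im = 0 := by
  rw [dihedralAct_sr, AddChar.map_zero_eq_one, one_smul, funext_iff]
  exact forall_congr' fun _ => Complex.conj_eq_iff_im

theorem dihedral_stabilizer_of_nonzero_general (hn : Odd n) (hi : i.Coprime n) {z : Fin m → ℂ}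
    (hz : z ≠ 0) :
    Nat.card {g : DihedralGroup n // dihedralAct n i m g z = z} ≤ 2 ∧
      (Nat.card {g : DihedralGroup n // dihedralAct n i m g z = z} = 2 ↔
        ∃ g : DihedralGroup n, ∀ t, (dihedralAct n i m g z t).im = 0) := by
  have : NeZero n := ⟨hn.pos.ne'⟩
  let := dihedralMulAction n i m
  have rotation_free : RotationFree (MulAction.stabilizer (DihedralGroup n) z) :=
    fun _ => (dihedralAct_r_eq_self_iff hi hz).mp
  refine ⟨rotation_free.card_le_two, (rotation_free.card_eq_two_iff_exists_conj_mem hn).trans ?_⟩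
  refine exists_congr fun g => ?_
  rw [inv_mul_mul_mem_stabilizer_iff]
  exact dihedralAct_sr_zero_eq_self_iff

end DihedralAct

/-- For every `z ∈ ℂ^m` with `z ≠ 0`, the stabilizer of `z` in `D_{2p}` has
order at most 2, and it has order exactly 2 if and only if there is a `g ∈ D_{2p}` such
that all coordinates of `g·z` are real. -/
theorem dihedral_stabilizer_of_nonzero
    (p : ℕ) (hp : p.Prime) (hodd : Odd p) (i : ℕ) (hi1 : 1 ≤ i) (hi2 : i ≤ p - 1)
    (m : ℕ) (hm : 1 ≤ m) :
    ∀ z : Fin m → ℂ, z ≠ 0 →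
      Nat.card {g : DihedralGroup p // dihedralAct p i m g z = z} ≤ 2 ∧
      (Nat.card {g : DihedralGroup p // dihedralAct p i m g z = z} = 2 ↔
        ∃ g : DihedralGroup p, ∀ t : Fin m, (dihedralAct p i m g z t).im = 0) := by
  intro z hz
  exact dihedral_stabilizer_of_nonzero_general hodd
    (Nat.coprime_of_lt_prime (by omega) (by omega) hp).symm hz

end
end

section
/- For 1 ≤ k ≤ m let K_k = { z ∈ ℂ^m : z_t = 0 for all t > k, and z_k = r·e^{√−1·λ} for some real r ≥ 0 and some λ with 0 ≤ λ ≤ π/p }. Then every point of the unit sphere { z ∈ ℂ^m : |z| = 1 } lies in g·K_k for some g ∈ D_{2p} and some 1 ≤ k ≤ m; that is, the D_{2p}-translates of the closed top-dimensional cells K_k cover the unit sphere. -/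
noncomputable section

/-!
Multiplying `z` by a suitable `p`-th root of unity turns its coordinate `z k` until its argument
lies in `[-π/p, π/p]`, and conjugation folds this interval onto `[0, π/p]`. Since `ω` is a primitive
`p`-th root of unity, both motions are realised in `D_{2p}`. Both are coordinatewise and fix `0`,
so the translates of a single `K_k` already cover all of `ℂ^k`; for the sphere the top cell `K_m`
suffices.
-/

open ComplexConjugate

/-- The closed sector of opening angle `α` above the positive real axis, in the polar form used for
the cells. -/
def closedSector (α : ℝ) : Set ℂ :=
  {u | ∃ r lam : ℝ, 0 ≤ r ∧ 0 ≤ lam ∧ lam ≤ α ∧ u = (r : ℂ) * Complex.exp (lam * Complex.I)}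

/-- The closed cell (a cone in `ℂ^m`) whose last possibly nonzero coordinate is `k` and lies in the
sector of angle `π / p`. As `Fin m` starts at `0`, this is `K_{k+1}`. -/
def dihedralCell (p : ℕ) {m : ℕ} (k : Fin m) : Set (Fin m → ℂ) :=
  {w | (∀ t > k, w t = 0) ∧ w k ∈ closedSector (Real.pi / p)}

theorem exists_pow_eq_one_mul_eq_norm_mul_exp {n : ℕ} (hn : n ≠ 0) (z : ℂ) :
    ∃ ξ : ℂ, ξ ^ n = 1 ∧
      ∃ φ : ℝ, |φ| ≤ Real.pi / n ∧ ξ * z = ‖z‖ * Complex.exp (φ * Complex.I) := by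
  set δ : ℝ := 2 * Real.pi / n with hδ
  set j : ℤ := round (δ⁻¹ * z.arg)
  have nearest_multiple : |z.arg - j * δ| ≤ |δ| / 2 := by
    rw [← AddCircle.norm_eq]
    exact AddCircle.norm_le_half_period δ (by positivity)
  refine ⟨Complex.exp (-(j * δ) * Complex.I), ?_, z.arg - j * δ, ?_, ?_⟩
  · rw [← Complex.exp_nat_mul, Complex.exp_eq_one_iff]
    refine ⟨-j, ?_⟩
    rw [hδ]
    push_cast
    field_simp
  · rwa [abs_of_nonneg (by positivity : 0 ≤ δ), hδ, div_right_comm,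
      mul_div_cancel_left₀ _ two_ne_zero] at nearest_multiple
  · conv_lhs => rw [← Complex.norm_mul_exp_arg_mul_I z]
    rw [mul_left_comm, ← Complex.exp_add]
    push_cast
    ring_nf

theorem exists_pow_eq_one_mul_mem_closedSector {n : ℕ} (hn : n ≠ 0) (z : ℂ) :
    ∃ ξ : ℂ, ξ ^ n = 1 ∧
      (ξ * z ∈ closedSector (Real.pi / n) ∨ ξ * conj z ∈ closedSector (Real.pi / n)) := by
  obtain ⟨ξ, hξ, φ, hφ, hz⟩ := exists_pow_eq_one_mul_eq_norm_mul_exp hn z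
  obtain ⟨hφ_lower, hφ_upper⟩ := abs_le.mp hφ
  rcases le_total 0 φ with hφ_sign | hφ_sign
  · exact ⟨ξ, hξ, .inl ⟨‖z‖, φ, norm_nonneg z, hφ_sign, hφ_upper, hz⟩⟩
  · refine ⟨conj ξ, by rw [← map_pow, hξ, map_one], .inr ⟨‖z‖, -φ, norm_nonneg z, ?_, ?_, ?_⟩⟩
    · exact neg_nonneg.mpr hφ_sign
    · exact neg_le.mp hφ_lower
    · rw [← map_mul, hz, map_mul, ← Complex.exp_conj, map_mul, Complex.conj_ofReal,
        Complex.conj_ofReal, Complex.conj_I, Complex.ofReal_neg, mul_neg, neg_mul]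

theorem exists_zmod_pow_val_mul_eq_one {R : Type*} [CommRing R] [IsDomain R] {n : ℕ} [NeZero n]
    {ω ξ : R} (hω : IsPrimitiveRoot ω n) (hξ : ξ ^ n = 1) :
    ∃ a : ZMod n, ω ^ a.val * ξ = 1 := by
  have hξ_inv : (ξ ^ (n - 1)) ^ n = 1 := by rw [pow_right_comm, hξ, one_pow]
  obtain ⟨a, ha_lt, ha⟩ := hω.eq_pow_of_pow_eq_one hξ_inv
  refine ⟨a, ?_⟩
  rw [ZMod.val_cast_of_lt ha_lt, ha, pow_sub_one_mul (NeZero.ne n), hξ]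

theorem isPrimitiveRoot_exp_two_pi_I_mul_div {p i : ℕ} (hp : p ≠ 0) (hi : i.Coprime p) :
    IsPrimitiveRoot (Complex.exp (2 * Real.pi * Complex.I * i / p)) p := by
  rw [mul_div_assoc]
  exact Complex.isPrimitiveRoot_exp_of_coprime i p hp hi

theorem exists_dihedralAct_smul_eq {p i : ℕ} (hp : p ≠ 0) (hi : i.Coprime p) {ξ : ℂ}
    (hξ : ξ ^ p = 1) {m : ℕ} (z : Fin m → ℂ) :
    ∃ g : DihedralGroup p, dihedralAct p i m g (ξ • z) = z := by
  have : NeZero p := ⟨hp⟩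
  obtain ⟨a, ha⟩ :=
    exists_zmod_pow_val_mul_eq_one (isPrimitiveRoot_exp_two_pi_I_mul_div hp hi) hξ
  refine ⟨.r a, funext fun t => ?_⟩
  simp only [dihedralAct, Pi.smul_apply, smul_eq_mul, ← mul_assoc, ha, one_mul]

theorem exists_dihedralAct_smul_star_eq {p i : ℕ} (hp : p ≠ 0) (hi : i.Coprime p) {ξ : ℂ}
    (hξ : ξ ^ p = 1) {m : ℕ} (z : Fin m → ℂ) :
    ∃ g : DihedralGroup p, dihedralAct p i m g (ξ • star z) = z := by
  have : NeZero p := ⟨hp⟩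
  obtain ⟨a, ha⟩ :=
    exists_zmod_pow_val_mul_eq_one (isPrimitiveRoot_exp_two_pi_I_mul_div hp hi) hξ
  refine ⟨.sr a, funext fun t => ?_⟩
  simp only [dihedralAct, Pi.smul_apply, smul_eq_mul, ← mul_assoc, ha, one_mul, Pi.star_apply,
    starRingEnd_apply, star_star]

theorem translated_cells_cover_sphere_general {p i m : ℕ} (hp : p ≠ 0) (hi : i.Coprime p)
    (k : Fin m) (z : Fin m → ℂ) (hz : ∀ t > k, z t = 0) :
    ∃ g : DihedralGroup p, ∃ w ∈ dihedralCell p k, z = dihedralAct p i m g w := by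
  obtain ⟨ξ, hξ, hsector | hsector⟩ := exists_pow_eq_one_mul_mem_closedSector hp (z k)
  · obtain ⟨g, hg⟩ := exists_dihedralAct_smul_eq hp hi hξ z
    exact ⟨g, ξ • z, ⟨fun t ht => by simp [hz t ht], hsector⟩, hg.symm⟩
  · obtain ⟨g, hg⟩ := exists_dihedralAct_smul_star_eq hp hi hξ z
    exact ⟨g, ξ • star z, ⟨fun t ht => by simp [hz t ht], hsector⟩, hg.symm⟩

/-- Every point of the unit sphere of `ℂ^m` lies in a `D_{2p}`-translate of
one of the closed top-dimensional cells
`K_k = {z : z_t = 0 for t > k, z_k = r·e^{iλ}, r ≥ 0, 0 ≤ λ ≤ π/p}`, `1 ≤ k ≤ m`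
(coordinates indexed `1,…,m`, so the coordinate `z_k` is `z ⟨k-1⟩`). -/
theorem translated_cells_cover_sphere
    (p : ℕ) (hp : p.Prime) (hodd : Odd p) (i : ℕ) (hi1 : 1 ≤ i) (hi2 : i ≤ p - 1)
    (m : ℕ) (hm : 1 ≤ m) :
    ∀ z : Fin m → ℂ, (∑ t, Complex.normSq (z t)) = 1 →
      ∃ (g : DihedralGroup p) (k : ℕ) (h1 : 1 ≤ k) (h2 : k ≤ m) (w : Fin m → ℂ),
        (∀ t : Fin m, k ≤ (t : ℕ) → w t = 0) ∧
        (∃ r lam : ℝ, 0 ≤ r ∧ 0 ≤ lam ∧ lam ≤ Real.pi / p ∧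
          w ⟨k - 1, by omega⟩ = (r : ℂ) * Complex.exp (lam * Complex.I)) ∧
        z = dihedralAct p i m g w := by
  intro z _
  have hi : i.Coprime p := (Nat.coprime_of_lt_prime (by omega) (by omega) hp).symm
  have hlast : ∀ t : Fin m, ¬ m - 1 < (t : ℕ) := by omega
  obtain ⟨g, w, ⟨-, hsector⟩, hz⟩ := translated_cells_cover_sphere_general hp.ne_zero hi
    ⟨m - 1, by omega⟩ z fun t ht => absurd ht (hlast t)
  exact ⟨g, m, hm, le_rfl, w, fun t ht => absurd t.isLt ht.not_gt, hsector, hz⟩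

end
end

section
/- For every odd prime p, every integer j with 1 ≤ j ≤ p − 1, and every m ≥ 1, the ℤ[D_{2p}]-linear maps d of the dihedral cellular complex C(j)_* satisfy d ∘ d = 0; that is, the data above define a chain complex of ℤ[D_{2p}]-modules. -/
open DihedralGroup Finsupp

noncomputable section

namespace DihedralCell

variable (p : ℕ)

/-- ζ, the rotation of order `p`. -/
def zeta : DihedralGroup p := .r 1

/-- τ, the reflection. -/
def tau : DihedralGroup p := .sr 0

/-- The order-2 subgroup ⟨τ⟩. -/
def Htau : Subgroup (DihedralGroup p) := Subgroup.zpowers (tau p)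

/-- Left cosets of ⟨τ⟩. -/
abbrev Cos := DihedralGroup p ⧸ Htau p

/-- Cell names of the dihedral cellular structure on `S(mγ_j)`: `a0 k q`/`b0 k q` are the
cells `q·a_{k,0}`, `q·b_{k,0}` (indexed by cosets of ⟨τ⟩); `a k l g`, `b k l g` (`1 ≤ l ≤ k-1`)
are the free cells `g·a_{k,l}`, `g·b_{k,l}`; `c k g` is `g·c_k`. -/
inductive CIdx : Type
  | a0 (k : ℕ) (q : Cos p)
  | b0 (k : ℕ) (q : Cos p)
  | a (k l : ℕ) (g : DihedralGroup p)
  | b (k l : ℕ) (g : DihedralGroup p)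
  | c (k : ℕ) (g : DihedralGroup p)

variable {p}

/-- The dimension of a cell. -/
def degC : CIdx p → ℕ
  | .a0 k _ => k - 1
  | .b0 k _ => k - 1
  | .a k l _ => k + l - 1
  | .b k l _ => k + l - 1
  | .c k _ => 2 * k - 1

/-- Validity of a cell index (the junk-free cells), for the sphere `S(mγ)`. -/
def validC (m : ℕ) : CIdx p → Prop
  | .a0 k _ => 1 ≤ k ∧ k ≤ m
  | .b0 k _ => 1 ≤ k ∧ k ≤ m
  | .a k l _ => 1 ≤ l ∧ l ≤ k - 1 ∧ k ≤ m
  | .b k l _ => 1 ≤ l ∧ l ≤ k - 1 ∧ k ≤ m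
  | .c k _ => 1 ≤ k ∧ k ≤ m

/-- The action of the dihedral group on cells. -/
def actC (g' : DihedralGroup p) : CIdx p → CIdx p
  | .a0 k q => .a0 k (g' • q)
  | .b0 k q => .b0 k (g' • q)
  | .a k l g => .a k l (g' * g)
  | .b k l g => .b k l (g' * g)
  | .c k g => .c k (g' * g)

variable (p)

/-- The total module of cellular chains (all degrees together). -/
abbrev ChC := CIdx p →₀ ℤ

/-- The `ℤ`-linear action of `D_{2p}` on chains. -/
def rhoC (g : DihedralGroup p) : ChC p →ₗ[ℤ] ChC p :=
  Finsupp.lmapDomain ℤ ℤ (actC g)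

/-- The submodule of chains of degree `n` (the degree-`n` term of the complex `C(j)`). -/
def Csub (m n : ℕ) : Submodule ℤ (ChC p) :=
  Finsupp.supported ℤ ℤ {i | validC m i ∧ degC i = n}

/-- The boundary of a single cell, following Lemma 2.2 of the paper (for the
representation `γ_j`, i.e. with `ζ_i = ζ^j`). -/
def bndC (j : ℕ) : CIdx p → ChC p
  | .a0 k q => if k ≤ 1 then 0 else single (.a0 (k-1) q) 1 - single (.b0 (k-1) q) 1
  | .b0 k q => if k ≤ 1 then 0 else single (.a0 (k-1) q) 1 - single (.b0 (k-1) q) 1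
  | .c k g =>
      if k ≤ 1 then
        (single (.b0 1 (↑(g * zeta p ^ (j * ((p+1)/2))))) 1 : ChC p) - single (.a0 1 ↑g) 1
      else
        single (.a k (k-1) g) (-1) + single (.a k (k-1) (g * tau p)) ((-1)^k)
        + single (.b k (k-1) (g * zeta p ^ (j * ((p+1)/2)))) 1
        + single (.b k (k-1) (g * zeta p ^ (j * ((p+1)/2)) * tau p)) ((-1)^(k-1))
  | .a k l g =>
      if l = 0 then 0
      else if l = k - 1 then
        (if k = 2 then (single (.a0 k (↑g : Cos p)) (-1) : ChC p)
         else single (.a k (k-2) g) (-1) + single (.a k (k-2) (g * tau p)) ((-1)^(k-1)))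
        + single (.c (k-1) g) (-1)
        - ∑ t ∈ Finset.range ((p-1)/2), single (.c (k-1) (g * zeta p ^ (j * (t+1)))) 1
        + ∑ t ∈ Finset.range ((p-1)/2),
            single (.c (k-1) (g * zeta p ^ (j * (t+1)) * tau p)) ((-1)^(k-2))
      else if l = 1 then
        single (.a (k-1) 1 g) 1 - single (.b (k-1) 1 g) 1 + single (.a0 k (↑g : Cos p)) ((-1)^(k-1))
      else
        single (.a (k-1) l g) 1 - single (.b (k-1) l g) 1
        + single (.a k (l-1) g) ((-1)^(k-l)) + single (.a k (l-1) (g * tau p)) ((-1)^(k-1))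
  | .b k l g =>
      if l = 0 then 0
      else if l = k - 1 then
        (if k = 2 then (single (.b0 k (↑g : Cos p)) (-1) : ChC p)
         else single (.b k (k-2) g) (-1) + single (.b k (k-2) (g * tau p)) ((-1)^(k-1)))
        + single (.c (k-1) g) (-1)
        - ∑ t ∈ Finset.range ((p-1)/2), single (.c (k-1) (g * zeta p ^ (j * (t+1)))) 1
        + ∑ t ∈ Finset.range ((p-1)/2),
            single (.c (k-1) (g * zeta p ^ (j * (t+1)) * tau p)) ((-1)^(k-2))
      else if l = 1 then
        single (.a (k-1) 1 g) 1 - single (.b (k-1) 1 g) 1 + single (.b0 k (↑g : Cos p)) ((-1)^(k-1))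
      else
        single (.a (k-1) l g) 1 - single (.b (k-1) l g) 1
        + single (.b k (l-1) g) ((-1)^(k-l)) + single (.b k (l-1) (g * tau p)) ((-1)^(k-1))

/-- The differential of the dihedral cellular complex `C(j)`. -/
def DC (j : ℕ) : ChC p →ₗ[ℤ] ChC p :=
  Finsupp.lift (ChC p) ℤ (CIdx p) (bndC p j)

/-- The submodule of `D_{2p}`-invariant chains of degree `n`. -/
def InvC (m n : ℕ) : Submodule ℤ (ChC p) :=
  Csub p m n ⊓ (⨅ g : DihedralGroup p, LinearMap.ker (rhoC p g - LinearMap.id))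

/-- Cycles of degree `n` of the underlying complex of abelian groups. -/
def ZcC (m j n : ℕ) : Submodule ℤ (ChC p) := Csub p m n ⊓ LinearMap.ker (DC p j)

/-- Degree-`n` homology of the underlying complex of abelian groups of `C(j)`. -/
def HcC (m j n : ℕ) : Type :=
  ↥(ZcC p m j n) ⧸ Submodule.comap (ZcC p m j n).subtype
    (Submodule.map (DC p j) (Csub p m (n+1)))

instance (m j n : ℕ) : AddCommGroup (HcC p m j n) :=
  inferInstanceAs (AddCommGroup (↥(ZcC p m j n) ⧸ Submodule.comap (ZcC p m j n).subtype
    (Submodule.map (DC p j) (Csub p m (n+1)))))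

instance (m j n : ℕ) : Module ℤ (HcC p m j n) :=
  inferInstanceAs (Module ℤ (↥(ZcC p m j n) ⧸ Submodule.comap (ZcC p m j n).subtype
    (Submodule.map (DC p j) (Csub p m (n+1)))))

/-- Cycles of degree `n` of the complex of `D_{2p}`-invariants `(C(j))^{D_{2p}}`. -/
def ZinvC (m j n : ℕ) : Submodule ℤ (ChC p) := InvC p m n ⊓ LinearMap.ker (DC p j)

/-- Degree-`n` homology of the complex of `D_{2p}`-invariants of `C(j)`. -/
def HinvC (m j n : ℕ) : Type :=
  ↥(ZinvC p m j n) ⧸ Submodule.comap (ZinvC p m j n).subtype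
    (Submodule.map (DC p j) (InvC p m (n+1)))

instance (m j n : ℕ) : AddCommGroup (HinvC p m j n) :=
  inferInstanceAs (AddCommGroup (↥(ZinvC p m j n) ⧸ Submodule.comap (ZinvC p m j n).subtype
    (Submodule.map (DC p j) (InvC p m (n+1)))))

instance (m j n : ℕ) : Module ℤ (HinvC p m j n) :=
  inferInstanceAs (Module ℤ (↥(ZinvC p m j n) ⧸ Submodule.comap (ZinvC p m j n).subtype
    (Submodule.map (DC p j) (InvC p m (n+1)))))

/-- The dual module: `ℤ`-linear functionals on chains. -/
abbrev DualC := ChC p →ₗ[ℤ] ℤ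

/-- Degree-`n` cochains of `Hom_{ℤ[D_{2p}]}(C(j), ℤ)`: `D_{2p}`-equivariant functionals
(`ℤ` with the trivial action) supported on the degree-`n` cells. -/
def KcoC (m n : ℕ) : Submodule ℤ (DualC p) :=
  (⨅ i : {i : CIdx p // ¬(validC m i ∧ degC i = n)},
      LinearMap.ker (LinearMap.applyₗ (single i.1 1)))
  ⊓ (⨅ g : DihedralGroup p, LinearMap.ker (LinearMap.lcomp ℤ ℤ (rhoC p g) - LinearMap.id))

open Classical in
/-- Projection of the total chain module onto its degree-`n` summand. -/
def projC (m n : ℕ) : ChC p →ₗ[ℤ] ChC p :=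
  Finsupp.lift (ChC p) ℤ (CIdx p)
    (fun i => if validC m i ∧ degC i = n then single i 1 else 0)

/-- The coboundary taking a degree-`n` cochain `f` to the degree-`(n+1)` cochain
`f ∘ d` (precomposition with the differential out of degree `n+1`). -/
def cobdC (m j n : ℕ) : DualC p →ₗ[ℤ] DualC p :=
  LinearMap.lcomp ℤ ℤ ((DC p j).comp (projC p m (n+1)))

/-- Degree-`n` cocycles of `Hom_{ℤ[D_{2p}]}(C(j), ℤ)`. -/
def ZcoC (m j n : ℕ) : Submodule ℤ (DualC p) := KcoC p m n ⊓ LinearMap.ker (cobdC p m j n)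

/-- Degree-`n` cohomology of the cochain complex `Hom_{ℤ[D_{2p}]}(C(j), ℤ)`. -/
def HcoC (m j n : ℕ) : Type :=
  ↥(ZcoC p m j n) ⧸ Submodule.comap (ZcoC p m j n).subtype
    (Submodule.map (cobdC p m j (n-1)) (KcoC p m (n-1)))

instance (m j n : ℕ) : AddCommGroup (HcoC p m j n) :=
  inferInstanceAs (AddCommGroup (↥(ZcoC p m j n) ⧸ Submodule.comap (ZcoC p m j n).subtype
    (Submodule.map (cobdC p m j (n-1)) (KcoC p m (n-1)))))

instance (m j n : ℕ) : Module ℤ (HcoC p m j n) :=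
  inferInstanceAs (Module ℤ (↥(ZcoC p m j n) ⧸ Submodule.comap (ZcoC p m j n).subtype
    (Submodule.map (cobdC p m j (n-1)) (KcoC p m (n-1)))))


end DihedralCell

end

/-!
Chains are read as elements of the group ring `ℤ[D_{2p}]` placed on a cell. In every boundary
formula the cell `s_{k,l}` (`s = a, b`) enters through the folded chain
`F_{k,l} = s_{k,l} + (-1)^l τ s_{k,l}`, or `F_{k,0} = s_{k,0}`, which satisfies
`τ F_{k,l} = (-1)^l F_{k,l}`: the boundary of `s_{k,l+1}` contains `± F_{k,l}`, and that of `c_k`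
is `ζ^{j(p+1)/2} F^b_{k,k-1} - F^a_{k,k-1}`. With `ξ = ζ^j`, `p = 2N + 1` and the signed reflection
`u = (-1)^k τ`, the cell `s_{k+1,k}` is attached to `c_k` by `-(1 + σ + σu)`, and `d ∘ d = 0` comes
down to two group ring identities: `(1 + σ + σu) ξ^(N+1) = 1 + σ ξ^N (1 + u)`, where `1 + u`
annihilates `F_{k,k-1}`, and `(1 + u)(1 + σ + σu) = (1 + u)(1 + ξ + ⋯ + ξ^(2N))`, which is fixed by
left multiplication by `ξ^(N+1)`.
-/

namespace DihedralCell

section Reflection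

variable {A : Type*}

lemma pow_mul_reflection_mul_pow [Monoid A] {ξ u : A} (hu : ξ * u * ξ = u) (n : ℕ) :
    ξ ^ n * u * ξ ^ n = u := by
  induction n with
  | zero => rw [pow_zero, one_mul, mul_one]
  | succ n ih =>
    calc ξ ^ (n + 1) * u * ξ ^ (n + 1) = ξ ^ n * (ξ * u * ξ) * ξ ^ n := by
          rw [pow_succ ξ n]
          nth_rw 2 [(Commute.refl ξ).pow_left n]
          simp only [mul_assoc]
      _ = u := by rw [hu, ih]

lemma pow_mul_reflection [Monoid A] {ξ u : A} (hu : ξ * u * ξ = u) {m n : ℕ}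
    (hξ : ξ ^ (m + n) = 1) : ξ ^ m * u = u * ξ ^ n := by
  calc ξ ^ m * u = ξ ^ m * u * ξ ^ (m + n) := by rw [hξ, mul_one]
    _ = u * ξ ^ n := by rw [pow_add, ← mul_assoc, pow_mul_reflection_mul_pow hu]

lemma pow_mul_geom_sum [Ring A] {ξ : A} {r : ℕ} (hξ : ξ ^ r = 1) (n : ℕ) :
    ξ ^ n * ∑ i ∈ Finset.range r, ξ ^ i = ∑ i ∈ Finset.range r, ξ ^ i := by
  have hfix : ξ * ∑ i ∈ Finset.range r, ξ ^ i = ∑ i ∈ Finset.range r, ξ ^ i := by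
    have h := mul_neg_geom_sum ξ r
    rw [hξ, sub_self, sub_mul, one_mul, sub_eq_zero] at h
    exact h.symm
  induction n with
  | zero => rw [pow_zero, one_mul]
  | succ n ih => rw [pow_succ, mul_assoc, hfix, ih]

/-- The element `ξ + ξ² + ⋯ + ξ^N`; the `σ` of the complex is the case `ξ = ζ^j`,
`N = (p - 1) / 2`. -/
def halfRotationSum [Semiring A] (ξ : A) (N : ℕ) : A :=
  ∑ i ∈ Finset.range N, ξ ^ (i + 1)

/-- The element `1 + σ + σu`, for `σ = halfRotationSum ξ N`: up to sign, the coefficient with which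
a top cell is attached to a cell `c_k`. -/
def attachingElement [Semiring A] (ξ u : A) (N : ℕ) : A :=
  1 + halfRotationSum ξ N + halfRotationSum ξ N * u

section Semiring

variable [Semiring A]

lemma halfRotationSum_mul_pow (ξ : A) (N n : ℕ) :
    halfRotationSum ξ N * ξ ^ n = ∑ i ∈ Finset.range N, ξ ^ (i + (n + 1)) := by
  simp only [halfRotationSum, Finset.sum_mul, ← pow_add, add_assoc, add_comm 1 n]

lemma one_add_halfRotationSum (ξ : A) (N : ℕ) :
    1 + halfRotationSum ξ N = ∑ i ∈ Finset.range (N + 1), ξ ^ i := by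
  rw [Finset.sum_range_succ', pow_zero, add_comm, halfRotationSum]

lemma one_add_halfRotationSum_add_mul_pow (ξ : A) (N : ℕ) :
    1 + halfRotationSum ξ N + halfRotationSum ξ N * ξ ^ N
      = ∑ i ∈ Finset.range (2 * N + 1), ξ ^ i := by
  rw [one_add_halfRotationSum, halfRotationSum_mul_pow, show 2 * N + 1 = N + 1 + N by ring,
    Finset.sum_range_add _ (N + 1) N]
  simp only [add_comm]

variable {ξ u : A} {N : ℕ}

lemma one_add_halfRotationSum_mul_pow (hξ : ξ ^ (2 * N + 1) = 1) :
    (1 + halfRotationSum ξ N) * ξ ^ (N + 1) = 1 + halfRotationSum ξ N * ξ ^ N := by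
  have hN : ξ ^ (N + (N + 1)) = 1 := by rw [← hξ]; congr 1; ring
  rw [one_add_halfRotationSum, halfRotationSum_mul_pow, Finset.sum_range_succ, add_mul,
    ← pow_add, hN, add_comm, Finset.sum_mul]
  simp only [← pow_add]

lemma halfRotationSum_mul_reflection (hu : ξ * u * ξ = u) (hξ : ξ ^ (2 * N + 1) = 1) :
    halfRotationSum ξ N * u = u * (halfRotationSum ξ N * ξ ^ N) := by
  rw [halfRotationSum_mul_pow, halfRotationSum, Finset.sum_mul, Finset.mul_sum,
    ← Finset.sum_range_reflect]
  refine Finset.sum_congr rfl fun i hi => pow_mul_reflection hu ?_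
  have hiN : i < N := Finset.mem_range.mp hi
  rw [show N - 1 - i + 1 + (i + (N + 1)) = 2 * N + 1 by omega, hξ]

lemma attachingElement_eq_one_add_mul (ξ u : A) (N : ℕ) :
    attachingElement ξ u N = 1 + halfRotationSum ξ N * (1 + u) := by
  rw [attachingElement, mul_add, mul_one, add_assoc]

lemma attachingElement_mul_pow (hu : ξ * u * ξ = u) (hξ : ξ ^ (2 * N + 1) = 1) :
    attachingElement ξ u N * ξ ^ (N + 1) = 1 + halfRotationSum ξ N * ξ ^ N * (1 + u) := by
  have hcomm : ξ ^ N * u = u * ξ ^ (N + 1) :=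
    pow_mul_reflection hu (by rw [← hξ]; congr 1; ring)
  rw [attachingElement, add_mul, one_add_halfRotationSum_mul_pow hξ, mul_assoc _ u, ← hcomm,
    ← mul_assoc, mul_add, mul_one, add_assoc]

lemma one_add_reflection_mul_attachingElement (hu : ξ * u * ξ = u) (huu : u * u = 1)
    (hξ : ξ ^ (2 * N + 1) = 1) :
    (1 + u) * attachingElement ξ u N = (1 + u) * ∑ i ∈ Finset.range (2 * N + 1), ξ ^ i := by
  have habsorb : (1 + u) * u = 1 + u := by rw [add_mul, one_mul, huu, add_comm]
  rw [attachingElement, halfRotationSum_mul_reflection hu hξ, mul_add, ← mul_assoc (1 + u) u,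
    habsorb, ← mul_add, one_add_halfRotationSum_add_mul_pow]

end Semiring

lemma pow_mul_one_add_reflection_mul_attachingElement [Ring A] {ξ u : A} {N : ℕ}
    (hu : ξ * u * ξ = u) (huu : u * u = 1) (hξ : ξ ^ (2 * N + 1) = 1) :
    ξ ^ (N + 1) * ((1 + u) * attachingElement ξ u N) = (1 + u) * attachingElement ξ u N := by
  have hcomm : ξ ^ (N + 1) * u = u * ξ ^ N :=
    pow_mul_reflection hu (by rw [← hξ]; congr 1; ring)
  rw [one_add_reflection_mul_attachingElement hu huu hξ, ← mul_assoc, mul_add, mul_one, hcomm,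
    add_mul, mul_assoc u, pow_mul_geom_sum hξ, pow_mul_geom_sum hξ, add_mul, one_mul]

end Reflection

section GroupRing

/-- The integral group ring `ℤ[D_{2p}]`. -/
abbrev GroupRing (p : ℕ) : Type := MonoidAlgebra ℤ (DihedralGroup p)

/-- The rotation `ζ^j` in the group ring. -/
noncomputable def rotation (p j : ℕ) : GroupRing p :=
  MonoidAlgebra.of ℤ _ (zeta p ^ j)

/-- The reflection `(-1)^k τ` in the group ring. -/
noncomputable def signedReflection (p k : ℕ) : GroupRing p :=
  (-1 : ℤ) ^ k • MonoidAlgebra.of ℤ _ (tau p)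

/-- The rotation `ζ^(j(p+1)/2)` in the group ring; for odd `p` its square is `ζ^j`. -/
noncomputable def halfRotation (p j : ℕ) : GroupRing p :=
  rotation p j ^ ((p + 1) / 2)

/-- The element `1 + σ + (-1)^k στ` of the group ring. -/
noncomputable def attachingCoeff (p j k : ℕ) : GroupRing p :=
  attachingElement (rotation p j) (signedReflection p k) ((p - 1) / 2)

variable {p : ℕ}

lemma coe_mul_tau (g : DihedralGroup p) : ((g * tau p : DihedralGroup p) : Cos p) = g :=
  QuotientGroup.mk_mul_of_mem g (Subgroup.mem_zpowers (tau p))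

lemma rotation_pow_self (p j : ℕ) : rotation p j ^ p = 1 := by
  simp [rotation, zeta, MonoidAlgebra.one_def]

lemma rotation_mul_signedReflection_mul_rotation (p j k : ℕ) :
    rotation p j * signedReflection p k * rotation p j = signedReflection p k := by
  simp [rotation, signedReflection, zeta, tau]

lemma signedReflection_mul_self (p k : ℕ) : signedReflection p k * signedReflection p k = 1 := by
  simp [signedReflection, tau, MonoidAlgebra.one_def, ← mul_pow]

lemma signedReflection_succ (p k : ℕ) : signedReflection p (k + 1) = -signedReflection p k := by
  rw [signedReflection, signedReflection, pow_succ, mul_neg_one, neg_smul]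

lemma attachingCoeff_mul_halfRotation (hodd : Odd p) (j k : ℕ) :
    ∃ y, attachingCoeff p j k * halfRotation p j = 1 + y * (1 + signedReflection p k) := by
  obtain ⟨N, rfl⟩ := hodd
  have hN : (2 * N + 1 - 1) / 2 = N := by omega
  have hN' : (2 * N + 1 + 1) / 2 = N + 1 := by omega
  rw [attachingCoeff, halfRotation, hN, hN']
  exact ⟨_, attachingElement_mul_pow (rotation_mul_signedReflection_mul_rotation _ j k)
    (rotation_pow_self _ j)⟩

lemma halfRotation_mul_attachingCoeff (hodd : Odd p) (j k : ℕ) :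
    halfRotation p j * ((1 + signedReflection p k) * attachingCoeff p j k)
      = (1 + signedReflection p k) * attachingCoeff p j k := by
  obtain ⟨N, rfl⟩ := hodd
  have hN : (2 * N + 1 - 1) / 2 = N := by omega
  have hN' : (2 * N + 1 + 1) / 2 = N + 1 := by omega
  rw [attachingCoeff, halfRotation, hN, hN']
  exact pow_mul_one_add_reflection_mul_attachingElement
    (rotation_mul_signedReflection_mul_rotation _ j k) (signedReflection_mul_self _ k)
    (rotation_pow_self _ j)

end GroupRing

section LinearExtension

variable {G M : Type*} [Monoid G] [AddCommGroup M]

/-- The `ℤ`-linear map `ℤ[G] → M` with prescribed values on the group elements. -/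
noncomputable def linearExtension (f : G → M) : MonoidAlgebra ℤ G →ₗ[ℤ] M :=
  Finsupp.linearCombination ℤ f ∘ₗ (MonoidAlgebra.coeffLinearEquiv ℤ).toLinearMap

lemma linearExtension_of (f : G → M) (g : G) :
    linearExtension f (MonoidAlgebra.of ℤ G g) = f g := by
  simp [linearExtension]

lemma linearMap_ext_of {φ ψ : MonoidAlgebra ℤ G →ₗ[ℤ] M}
    (h : ∀ g, φ (MonoidAlgebra.of ℤ G g) = ψ (MonoidAlgebra.of ℤ G g)) : φ = ψ := by
  ext g
  exact h g

end LinearExtension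

/-- The two families of cells, `a` and `b`, which the complex treats symmetrically. -/
inductive Hemisphere : Type
  | a
  | b

namespace Hemisphere

variable {p : ℕ}

/-- The cell `q · s_{k,0}`, for a coset `q` of `⟨τ⟩`. -/
def cosetCell : Hemisphere → ℕ → Cos p → CIdx p
  | a => .a0
  | b => .b0

/-- The cell `g · s_{k,l}`, for `l ≥ 1`. -/
def freeCell : Hemisphere → ℕ → ℕ → DihedralGroup p → CIdx p
  | a => .a
  | b => .b

/-- The chain `x · s_{k,l}`, for `l ≥ 1`. -/
noncomputable def freeChain (s : Hemisphere) (k l : ℕ) : GroupRing p →ₗ[ℤ] ChC p :=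
  linearExtension fun g => single (s.freeCell k l g) 1

/-- The chain `x · F_{k,l}`, where `F_{k,0} = s_{k,0}` and `F_{k,l} = s_{k,l} + (-1)^l τ s_{k,l}`
for `l ≥ 1`. -/
noncomputable def foldedChain (s : Hemisphere) (k : ℕ) : ℕ → GroupRing p →ₗ[ℤ] ChC p
  | 0 => linearExtension fun g => single (s.cosetCell k (g : Cos p)) 1
  | l + 1 => s.freeChain k (l + 1) ∘ₗ LinearMap.mulRight ℤ (1 + signedReflection p (l + 1))

lemma freeChain_of (s : Hemisphere) (k l : ℕ) (g : DihedralGroup p) :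
    s.freeChain k l (MonoidAlgebra.of ℤ _ g) = single (s.freeCell k l g) 1 :=
  linearExtension_of _ g

lemma foldedChain_zero_of (s : Hemisphere) (k : ℕ) (g : DihedralGroup p) :
    s.foldedChain k 0 (MonoidAlgebra.of ℤ _ g) = single (s.cosetCell k (g : Cos p)) 1 :=
  linearExtension_of _ g

lemma foldedChain_succ (s : Hemisphere) (k l : ℕ) (x : GroupRing p) :
    s.foldedChain k (l + 1) x = s.freeChain k (l + 1) (x * (1 + signedReflection p (l + 1))) :=
  rfl

lemma foldedChain_succ_of (s : Hemisphere) (k l : ℕ) (g : DihedralGroup p) :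
    s.foldedChain k (l + 1) (MonoidAlgebra.of ℤ _ g)
      = single (s.freeCell k (l + 1) g) 1
        + (-1 : ℤ) ^ (l + 1) • single (s.freeCell k (l + 1) (g * tau p)) 1 := by
  rw [foldedChain_succ, mul_add, mul_one, signedReflection, mul_smul_comm, ← map_mul, map_add,
    map_smul, freeChain_of, freeChain_of]

lemma foldedChain_mul_signedReflection (s : Hemisphere) (k l : ℕ) (x : GroupRing p) :
    s.foldedChain k l (x * signedReflection p (l + 1)) = -s.foldedChain k l x := by
  cases l with
  | zero =>
    suffices s.foldedChain k 0 ∘ₗ LinearMap.mulRight ℤ (signedReflection p 1)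
        = -s.foldedChain k 0 from LinearMap.congr_fun this x
    refine linearMap_ext_of fun g => ?_
    rw [LinearMap.comp_apply, LinearMap.mulRight_apply, signedReflection, pow_one, mul_smul_comm,
      ← map_mul, map_smul, LinearMap.neg_apply, foldedChain_zero_of, foldedChain_zero_of,
      coe_mul_tau, neg_one_smul]
  | succ l =>
    have habsorb : signedReflection p (l + 1) * (1 + signedReflection p (l + 1))
        = 1 + signedReflection p (l + 1) := by
      rw [mul_add, mul_one, signedReflection_mul_self, add_comm]
    rw [foldedChain_succ, foldedChain_succ, signedReflection_succ p (l + 1), mul_neg, neg_mul,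
      mul_assoc, habsorb, map_neg]

lemma foldedChain_mul_one_add_signedReflection (s : Hemisphere) (k l : ℕ) (x : GroupRing p) :
    s.foldedChain k l (x * (1 + signedReflection p (l + 1))) = 0 := by
  rw [mul_add, mul_one, map_add, foldedChain_mul_signedReflection, add_neg_cancel]

lemma foldedChain_mul_attachingCoeff (s : Hemisphere) (j k l : ℕ) (x : GroupRing p) :
    s.foldedChain k l (x * attachingCoeff p j (l + 1)) = s.foldedChain k l x := by
  rw [attachingCoeff, attachingElement_eq_one_add_mul, mul_add, mul_one, ← mul_assoc, map_add,
    foldedChain_mul_one_add_signedReflection, add_zero]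

lemma foldedChain_mul_attachingCoeff_mul_halfRotation (hodd : Odd p) (s : Hemisphere)
    (j k l : ℕ) (x : GroupRing p) :
    s.foldedChain k l (x * attachingCoeff p j (l + 1) * halfRotation p j)
      = s.foldedChain k l x := by
  obtain ⟨y, hy⟩ := attachingCoeff_mul_halfRotation hodd j (l + 1)
  rw [mul_assoc, hy, mul_add, mul_one, ← mul_assoc, map_add,
    foldedChain_mul_one_add_signedReflection, add_zero]

end Hemisphere

open Hemisphere

section Boundary

variable {p : ℕ} (j : ℕ)

/-- The chain `x · c_k`. -/
noncomputable def cChain (k : ℕ) : GroupRing p →ₗ[ℤ] ChC p :=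
  linearExtension fun g => single (.c k g) 1

lemma cChain_of (k : ℕ) (g : DihedralGroup p) :
    cChain k (MonoidAlgebra.of ℤ _ g) = single (.c k g) 1 :=
  linearExtension_of _ g

lemma DC_single_one (i : CIdx p) : DC p j (single i 1) = bndC p j i := by
  simp only [DC, Finsupp.lift_apply, zero_smul, Finsupp.sum_single_index, one_smul]

lemma DC_foldedChain_one_zero (s : Hemisphere) (x : GroupRing p) :
    DC p j (s.foldedChain 1 0 x) = 0 := by
  suffices DC p j ∘ₗ s.foldedChain 1 0 = 0 from LinearMap.congr_fun this x
  refine linearMap_ext_of fun g => ?_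
  rw [LinearMap.comp_apply, foldedChain_zero_of, DC_single_one]
  cases s <;> simp [cosetCell, bndC]

lemma DC_foldedChain_zero (s : Hemisphere) (k : ℕ) (x : GroupRing p) :
    DC p j (s.foldedChain (k + 2) 0 x)
      = a.foldedChain (k + 1) 0 x - b.foldedChain (k + 1) 0 x := by
  suffices DC p j ∘ₗ s.foldedChain (k + 2) 0 = a.foldedChain (k + 1) 0 - b.foldedChain (k + 1) 0
    from LinearMap.congr_fun this x
  refine linearMap_ext_of fun g => ?_
  rw [LinearMap.comp_apply, LinearMap.sub_apply]
  simp only [foldedChain_zero_of, DC_single_one]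
  cases s <;> simp [cosetCell, bndC]

lemma of_mul_halfRotation (g : DihedralGroup p) :
    MonoidAlgebra.of ℤ _ g * halfRotation p j
      = MonoidAlgebra.of ℤ _ (g * zeta p ^ (j * ((p + 1) / 2))) := by
  rw [halfRotation, rotation, ← map_pow, ← pow_mul, ← map_mul]

lemma DC_cChain (k : ℕ) (x : GroupRing p) :
    DC p j (cChain (k + 1) x)
      = b.foldedChain (k + 1) k (x * halfRotation p j) - a.foldedChain (k + 1) k x := by
  suffices DC p j ∘ₗ cChain (k + 1)
      = b.foldedChain (k + 1) k ∘ₗ LinearMap.mulRight ℤ (halfRotation p j)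
        - a.foldedChain (k + 1) k from LinearMap.congr_fun this x
  refine linearMap_ext_of fun g => ?_
  rw [LinearMap.comp_apply, LinearMap.sub_apply, LinearMap.comp_apply, LinearMap.mulRight_apply,
    of_mul_halfRotation, cChain_of, DC_single_one]
  cases k with
  | zero =>
    rw [foldedChain_zero_of, foldedChain_zero_of]
    simp only [bndC, cosetCell, zero_add, le_refl, if_true]
  | succ k =>
    rw [foldedChain_succ_of, foldedChain_succ_of]
    simp only [bndC, freeCell, show ¬k + 1 + 1 ≤ 1 by omega, if_false, Nat.add_sub_cancel,
      ← smul_single_one _ (-1 : ℤ), ← smul_single_one _ ((_ : ℤ) ^ _)]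
    module

lemma DC_freeChain {k l : ℕ} (hl : l + 1 < k) (s : Hemisphere) (x : GroupRing p) :
    DC p j (s.freeChain (k + 1) (l + 1) x)
      = (-1 : ℤ) ^ (k - l) • s.foldedChain (k + 1) l x
        + (a.freeChain k (l + 1) x - b.freeChain k (l + 1) x) := by
  suffices DC p j ∘ₗ s.freeChain (k + 1) (l + 1) = (-1 : ℤ) ^ (k - l) • s.foldedChain (k + 1) l
      + (a.freeChain k (l + 1) - b.freeChain k (l + 1)) from LinearMap.congr_fun this x
  refine linearMap_ext_of fun g => ?_
  have hk : ¬l + 1 = k := hl.ne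
  simp only [LinearMap.comp_apply, LinearMap.add_apply, LinearMap.sub_apply, LinearMap.smul_apply,
    freeChain_of, DC_single_one]
  cases l with
  | zero =>
    rw [foldedChain_zero_of]
    cases s <;>
      simp only [bndC, freeCell, cosetCell, ← smul_single_one _ ((_ : ℤ) ^ _), hk,
        Nat.add_sub_cancel, Nat.sub_zero, zero_add, one_ne_zero, if_true, if_false] <;>
      abel
  | succ l =>
    have hl0 : ¬l + 1 + 1 = 0 := by omega
    have hl1 : ¬l + 1 + 1 = 1 := by omega
    have hsign : (-1 : ℤ) ^ (k - (l + 1)) * (-1) ^ (l + 1) = (-1) ^ k := by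
      rw [← pow_add, Nat.sub_add_cancel (by omega)]
    rw [foldedChain_succ_of, smul_add, smul_smul, hsign]
    cases s <;>
      simp only [bndC, freeCell, ← smul_single_one _ ((_ : ℤ) ^ _), hk, hl0, hl1,
        Nat.add_sub_cancel, Nat.add_sub_add_right, if_false] <;>
      abel

lemma of_mul_attachingCoeff (k : ℕ) (g : DihedralGroup p) :
    MonoidAlgebra.of ℤ _ g * attachingCoeff p j k
      = MonoidAlgebra.of ℤ _ g
        + ∑ t ∈ Finset.range ((p - 1) / 2), MonoidAlgebra.of ℤ _ (g * zeta p ^ (j * (t + 1)))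
        + (-1 : ℤ) ^ k • ∑ t ∈ Finset.range ((p - 1) / 2),
            MonoidAlgebra.of ℤ _ (g * zeta p ^ (j * (t + 1)) * tau p) := by
  simp only [attachingCoeff, attachingElement, halfRotationSum, rotation, signedReflection,
    mul_add, mul_one, Finset.sum_mul, Finset.mul_sum, mul_smul_comm, ← map_pow, ← pow_mul,
    ← map_mul, Finset.smul_sum, mul_assoc]

lemma DC_freeChain_top (s : Hemisphere) (k : ℕ) (x : GroupRing p) :
    DC p j (s.freeChain (k + 2) (k + 1) x)
      = -s.foldedChain (k + 2) k x - cChain (k + 1) (x * attachingCoeff p j (k + 1)) := by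
  suffices DC p j ∘ₗ s.freeChain (k + 2) (k + 1) = -s.foldedChain (k + 2) k
      - cChain (k + 1) ∘ₗ LinearMap.mulRight ℤ (attachingCoeff p j (k + 1))
    from LinearMap.congr_fun this x
  refine linearMap_ext_of fun g => ?_
  simp only [LinearMap.comp_apply, LinearMap.sub_apply, LinearMap.neg_apply,
    LinearMap.mulRight_apply, of_mul_attachingCoeff, map_add, map_smul, map_sum, cChain_of,
    freeChain_of, DC_single_one]
  cases k with
  | zero =>
    rw [foldedChain_zero_of]
    cases s <;>
      simp only [bndC, freeCell, cosetCell, ← smul_single_one _ (-1 : ℤ), zero_add, one_ne_zero,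
        if_true, if_false, Nat.add_one_sub_one, Nat.sub_self, pow_zero, pow_one] <;>
      module
  | succ k =>
    have hk0 : ¬k + 1 + 1 = 0 := by omega
    have hk2 : ¬k + 1 + 2 = 2 := by omega
    rw [foldedChain_succ_of]
    cases s <;>
      simp only [bndC, freeCell, ← smul_single_one _ (-1 : ℤ), ← smul_single_one _ ((_ : ℤ) ^ _),
        ← Finset.smul_sum, hk0, hk2, if_true, if_false, Nat.add_one_sub_one, Nat.add_sub_cancel] <;>
      module

end Boundary

section BoundarySquared

variable {p : ℕ} (j : ℕ)

lemma DC_foldedChain {k l : ℕ} (hl : l < k) (s : Hemisphere) (x : GroupRing p) :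
    DC p j (s.foldedChain (k + 1) l x) = a.foldedChain k l x - b.foldedChain k l x := by
  cases l with
  | zero =>
    obtain ⟨k, rfl⟩ := Nat.exists_eq_add_of_lt hl
    rw [zero_add, DC_foldedChain_zero]
  | succ l =>
    rw [foldedChain_succ, DC_freeChain j hl, foldedChain_mul_one_add_signedReflection, smul_zero,
      zero_add, foldedChain_succ, foldedChain_succ]

lemma DC_foldedChain_top (s : Hemisphere) (k : ℕ) (x : GroupRing p) :
    DC p j (s.foldedChain (k + 2) (k + 1) x)
      = -cChain (k + 1) (x * ((1 + signedReflection p (k + 1)) * attachingCoeff p j (k + 1))) := by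
  rw [foldedChain_succ, DC_freeChain_top, foldedChain_mul_one_add_signedReflection, neg_zero,
    zero_sub, mul_assoc]

lemma DC_cChain_mul_attachingCoeff (hodd : Odd p) (k : ℕ) (x : GroupRing p) :
    DC p j (cChain (k + 1) (x * attachingCoeff p j (k + 1)))
      = b.foldedChain (k + 1) k x - a.foldedChain (k + 1) k x := by
  rw [DC_cChain, foldedChain_mul_attachingCoeff_mul_halfRotation hodd,
    foldedChain_mul_attachingCoeff]

lemma DC_freeChain_a_sub_freeChain_b {k l : ℕ} (hl : l < k) (x : GroupRing p) :
    DC p j (a.freeChain (k + 1) (l + 1) x - b.freeChain (k + 1) (l + 1) x)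
      = (-1 : ℤ) ^ (k - l) • (a.foldedChain (k + 1) l x - b.foldedChain (k + 1) l x) := by
  obtain hl | rfl := Nat.lt_or_eq_of_le (Nat.succ_le_of_lt hl)
  · rw [map_sub, DC_freeChain j hl, DC_freeChain j hl]
    module
  · rw [map_sub, DC_freeChain_top, DC_freeChain_top, Nat.succ_sub le_rfl, Nat.sub_self]
    module

lemma DC_DC_foldedChain_zero (s : Hemisphere) (k : ℕ) (x : GroupRing p) :
    DC p j (DC p j (s.foldedChain (k + 1) 0 x)) = 0 := by
  match k with
  | 0 => rw [DC_foldedChain_one_zero, map_zero]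
  | 1 => rw [DC_foldedChain_zero, map_sub, DC_foldedChain_one_zero, DC_foldedChain_one_zero,
      sub_zero]
  | k + 2 => rw [DC_foldedChain_zero, map_sub, DC_foldedChain_zero, DC_foldedChain_zero, sub_self]

lemma DC_DC_freeChain {k l : ℕ} (hl : l < k) (s : Hemisphere) (x : GroupRing p) :
    DC p j (DC p j (s.freeChain (k + 2) (l + 1) x)) = 0 := by
  rw [DC_freeChain j (by omega), map_add, map_smul, DC_foldedChain j (by omega),
    DC_freeChain_a_sub_freeChain_b j hl, Nat.succ_sub hl.le, pow_succ]
  module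

lemma DC_DC_freeChain_top (hodd : Odd p) (s : Hemisphere) (k : ℕ) (x : GroupRing p) :
    DC p j (DC p j (s.freeChain (k + 2) (k + 1) x)) = 0 := by
  rw [DC_freeChain_top, map_sub, map_neg, DC_foldedChain j k.lt_succ_self,
    DC_cChain_mul_attachingCoeff j hodd]
  abel

lemma DC_DC_cChain (hodd : Odd p) (k : ℕ) (x : GroupRing p) :
    DC p j (DC p j (cChain (k + 1) x)) = 0 := by
  rw [DC_cChain, map_sub]
  cases k with
  | zero => rw [DC_foldedChain_one_zero, DC_foldedChain_one_zero, sub_zero]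
  | succ k =>
    rw [DC_foldedChain_top, DC_foldedChain_top, mul_assoc,
      halfRotation_mul_attachingCoeff hodd, sub_self]

lemma DC_DC_single_freeCell (hodd : Odd p) {k l : ℕ} (hl : 1 ≤ l) (hlk : l ≤ k - 1)
    (s : Hemisphere) (g : DihedralGroup p) :
    DC p j (DC p j (single (s.freeCell k l g) 1)) = 0 := by
  obtain ⟨l, rfl⟩ := Nat.exists_eq_add_of_le' hl
  obtain ⟨k, rfl⟩ : ∃ k', k = k' + 2 := ⟨k - 2, by omega⟩
  rw [← freeChain_of]
  obtain hlt | rfl : l < k ∨ l = k := by omega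
  · exact DC_DC_freeChain j hlt s _
  · exact DC_DC_freeChain_top j hodd s l _

lemma DC_DC_single_cosetCell {k : ℕ} (hk : 1 ≤ k) (s : Hemisphere) (q : Cos p) :
    DC p j (DC p j (single (s.cosetCell k q) 1)) = 0 := by
  obtain ⟨k, rfl⟩ := Nat.exists_eq_add_of_le' hk
  obtain ⟨g, rfl⟩ := QuotientGroup.mk_surjective q
  rw [← foldedChain_zero_of]
  exact DC_DC_foldedChain_zero j s k _

lemma DC_DC_single (hodd : Odd p) {m : ℕ} {i : CIdx p} (hi : validC m i) :
    DC p j (DC p j (single i 1)) = 0 := by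
  cases i with
  | a0 k q => exact DC_DC_single_cosetCell j hi.1 a q
  | b0 k q => exact DC_DC_single_cosetCell j hi.1 b q
  | a k l g => exact DC_DC_single_freeCell j hodd hi.1 hi.2.1 a g
  | b k l g => exact DC_DC_single_freeCell j hodd hi.1 hi.2.1 b g
  | c k g =>
    obtain ⟨k, rfl⟩ := Nat.exists_eq_add_of_le' hi.1
    rw [← cChain_of]
    exact DC_DC_cChain j hodd k _

end BoundarySquared

section Degree

variable {p : ℕ} (j : ℕ)

lemma bndC_mem_Csub {m n : ℕ} {i : CIdx p} (hi : validC m i) (hn : degC i = n + 1) :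
    bndC p j i ∈ Csub p m n := by
  have hsingle (i : CIdx p) (z : ℤ) (h : validC m i ∧ degC i = n) :
      (single i z : ChC p) ∈ Csub p m n :=
    Finsupp.single_mem_supported ℤ z h
  cases i <;> simp only [validC, degC] at hi hn <;> simp only [bndC] <;> split_ifs <;>
  repeat' first
    | exact Submodule.zero_mem _
    | refine Submodule.sum_mem _ fun t _ => ?_
    | refine Submodule.add_mem _ ?_ ?_
    | refine Submodule.sub_mem _ ?_ ?_
    | refine hsingle _ _ ?_; simp only [validC, degC]; omega

lemma Csub_le_of_single_mem {m n : ℕ} {S : Submodule ℤ (ChC p)}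
    (h : ∀ i : CIdx p, validC m i → degC i = n → single i 1 ∈ S) : Csub p m n ≤ S := by
  rw [Csub, Finsupp.supported_eq_span_single, Submodule.span_le]
  rintro _ ⟨i, ⟨hi, hn⟩, rfl⟩
  exact h i hi hn

end Degree

end DihedralCell

open DihedralCell in
theorem dihedral_cellular_is_chain_complex_general {p : ℕ} (hodd : Odd p) (j m : ℕ) :
    (∀ n : ℕ, ∀ x ∈ Csub p m (n + 1), DC p j x ∈ Csub p m n) ∧
    (∀ n : ℕ, ∀ x ∈ Csub p m n, DC p j (DC p j x) = 0) := by
  refine ⟨fun n => ?_, fun n => ?_⟩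
  · have hle : Csub p m (n + 1) ≤ (Csub p m n).comap (DC p j) :=
      Csub_le_of_single_mem fun i hi hn => by
        rw [Submodule.mem_comap, DC_single_one]
        exact bndC_mem_Csub j hi hn
    exact hle
  · have hle : Csub p m n ≤ LinearMap.ker (DC p j ∘ₗ DC p j) :=
      Csub_le_of_single_mem fun i hi _ => DC_DC_single j hodd hi
    exact hle

open DihedralCell in
/-- For every odd prime `p`, every `1 ≤ j ≤ p-1` and every `m ≥ 1`, the
`ℤ[D_{2p}]`-linear differential `d` of the dihedral cellular complex `C(j)` maps the
degree-`(n+1)` term into the degree-`n` term and satisfies `d ∘ d = 0`; that is, the data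
define a chain complex of `ℤ[D_{2p}]`-modules. -/
theorem dihedral_cellular_is_chain_complex
    (p : ℕ) (hp : p.Prime) (hodd : Odd p)
    (j : ℕ) (hj1 : 1 ≤ j) (hj2 : j ≤ p - 1)
    (m : ℕ) (hm : 1 ≤ m) :
    (∀ n : ℕ, ∀ x ∈ Csub p m (n+1), DC p j x ∈ Csub p m n) ∧
    (∀ n : ℕ, ∀ x ∈ Csub p m n, DC p j (DC p j x) = 0) := by
  exact dihedral_cellular_is_chain_complex_general hodd j m
end
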